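/- (Theorem 1, existence part with explicit representation.) Let A : ℝ → Matrix (Fin n) (Fin n) ℝ and f : ℝ → (Fin n → ℝ) be continuous, let 0 = t₁ < t₂ < … < t_m = 1 with 2 ≤ m, let F₁, …, F_m be constant n×n real matrices, let Φ be a fundamental matrix (Φ̇ = A(t)Φ, Φ(t) invertible for all t), let Φ₁, …, Φ_m satisfy Φ̇_k = A(t)Φ_k with Σ_{k=1}^{m} Φ_k(t) = Φ(t), and suppose F = Σ_{j=1}^{m} F_j Φ(t_j) is invertible. Set C = F⁻¹ (α − Σ_{j=1}^{m} F_j Σ_{k=1}^{m} Φ_k(t_j) ∫_{t_k}^{t_j} Φ(s)⁻¹ f(s) ds). Then x(t) = Φ(t)C + Σ_{k=1}^{m} Φ_k(t) ∫_{t_k}^{t} Φ(s)⁻¹ f(s) ds satisfies ẋ(t) = A(t)x(t) + f(t) for all t and Σ_{j=1}^{m} F_j x(t_j) = α. -/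

import Mathlib

open scoped Matrix

theorem aux_mulVec {n : ℕ} {M : ℝ → Matrix (Fin n) (Fin n) ℝ} {M' : Matrix (Fin n) (Fin n) ℝ}
    {v : ℝ → Fin n → ℝ} {v' : Fin n → ℝ} {t : ℝ}
    (hM : ∀ i j, HasDerivAt (fun s => M s i j) (M' i j) t) (hv : HasDerivAt v v' t) :
    HasDerivAt (fun s => M s *ᵥ v s) (M' *ᵥ v t + M t *ᵥ v') t := by
  rw [hasDerivAt_pi] at hv ⊢
  intro i
  have h := HasDerivAt.fun_sum (u := Finset.univ) (fun j _ => (hM i j).mul (hv j))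
  simp only [Matrix.mulVec, dotProduct, Pi.add_apply]
  rw [← Finset.sum_add_distrib]
  exact h

/-- Theorem 1 (existence part with explicit representation): with
`C = F⁻¹ (α − Σ_j F_j Σ_k Φ_k(t_j) ∫_{t_k}^{t_j} Φ(s)⁻¹ f(s) ds)`, the function
`x(t) = Φ(t)C + Σ_k Φ_k(t) ∫_{t_k}^{t} Φ(s)⁻¹ f(s) ds` solves `ẋ = A(t)x + f(t)` and
satisfies the boundary condition `Σ_j F_j x(t_j) = α`. -/
theorem stmt_7 (n m : ℕ) (hm : 2 ≤ m)
    (A : ℝ → Matrix (Fin n) (Fin n) ℝ) (f : ℝ → Fin n → ℝ)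
    (hA : Continuous A) (hf : Continuous f)
    (ts : Fin m → ℝ) (hmono : StrictMono ts)
    (h0 : ts ⟨0, by omega⟩ = 0) (h1 : ts ⟨m - 1, by omega⟩ = 1)
    (F : Fin m → Matrix (Fin n) (Fin n) ℝ)
    (Φ : ℝ → Matrix (Fin n) (Fin n) ℝ)
    (hΦ : ∀ t i j, HasDerivAt (fun s => Φ s i j) ((A t * Φ t) i j) t)
    (hinv : ∀ t, IsUnit (Φ t))
    (Φk : Fin m → ℝ → Matrix (Fin n) (Fin n) ℝ)
    (hΦk : ∀ k t i j, HasDerivAt (fun s => Φk k s i j) ((A t * Φk k t) i j) t)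
    (hsum : ∀ t, ∑ k, Φk k t = Φ t)
    (hF : IsUnit (∑ j, F j * Φ (ts j)))
    (α : Fin n → ℝ)
    (C : Fin n → ℝ)
    (hC : C = (∑ j, F j * Φ (ts j))⁻¹ *ᵥ
      (α - ∑ j, F j *ᵥ ∑ k, Φk k (ts j) *ᵥ ∫ s in ts k..ts j, (Φ s)⁻¹ *ᵥ f s))
    (x : ℝ → Fin n → ℝ)
    (hxdef : ∀ t, x t = Φ t *ᵥ C + ∑ k, Φk k t *ᵥ ∫ s in ts k..t, (Φ s)⁻¹ *ᵥ f s) :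
    (∀ t, HasDerivAt x (A t *ᵥ x t + f t) t) ∧ ∑ j, F j *ᵥ x (ts j) = α := by
  constructor
  · intro t
    have hc : Continuous Φ := by
      refine continuous_pi fun i => continuous_pi fun j => ?_
      exact continuous_iff_continuousAt.2 fun t => (hΦ t i j).continuousAt
    have hg : Continuous (fun s => (Φ s)⁻¹ *ᵥ f s) := by
      refine Continuous.matrix_mulVec ?_ hf
      simp only [Matrix.inv_def, Ring.inverse_eq_inv']
      refine Continuous.smul (hc.matrix_det.inv₀ fun s => ?_) hc.matrix_adjugate
      exact ((Matrix.isUnit_iff_isUnit_det _).1 (hinv s)).ne_zero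
    have hI : ∀ k, HasDerivAt (fun u => ∫ s in ts k..u, (Φ s)⁻¹ *ᵥ f s) ((Φ t)⁻¹ *ᵥ f t) t :=
      fun k => intervalIntegral.integral_hasDerivAt_right (hg.intervalIntegrable _ _)
        (hg.stronglyMeasurableAtFilter _ _) hg.continuousAt
    have hd := (aux_mulVec (hΦ t) (hasDerivAt_const t C)).add
      (HasDerivAt.fun_sum (u := Finset.univ) fun k _ => aux_mulVec (hΦk k t) (hI k))
    have hx : x = fun t => Φ t *ᵥ C + ∑ k, Φk k t *ᵥ ∫ s in ts k..t, (Φ s)⁻¹ *ᵥ f s :=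
      funext hxdef
    rw [hx]
    refine HasDerivAt.congr_deriv hd ?_
    rw [Finset.sum_add_distrib, ← Matrix.sum_mulVec, hsum, Matrix.mulVec_mulVec,
      Matrix.mul_nonsing_inv _ ((Matrix.isUnit_iff_isUnit_det _).1 (hinv t))]
    simp only [Matrix.mulVec_zero, add_zero, Matrix.one_mulVec, Matrix.mulVec_add,
      Matrix.mulVec_sum, Matrix.mulVec_mulVec, add_assoc]
  · simp only [hxdef, Matrix.mulVec_add, Finset.sum_add_distrib]
    have : ∑ j, F j *ᵥ (Φ (ts j) *ᵥ C) = (∑ j, F j * Φ (ts j)) *ᵥ C := by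
      simp only [Matrix.sum_mulVec, Matrix.mulVec_mulVec]
    rw [this, hC, Matrix.mulVec_mulVec,
      Matrix.mul_nonsing_inv _ ((Matrix.isUnit_iff_isUnit_det _).1 hF), Matrix.one_mulVec]
    exact sub_add_cancel _ _
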